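/- arXiv:1810.11412 — 7 statements merged into one kernel-verified Lean document; each statement's English description precedes it below -/
import Mathlib

section
/- Let d ≥ 1 and let a_0, a_1, …, a_d be quaternions. If the function (z,w) ↦ ∑_{n=0}^{d} z^n · w · z^{d-n} · a_n vanishes identically on ℍ × ℍ, then a_n = 0 for every n = 0, …, d. (Linear independence, as functions, of the monomials of bidegree (d,1) with right quaternionic coefficients.) -/
open Quaternion ComplexConjugate

/-- The functions `z ↦ z ^ n * conj z ^ (d - n)`, `n ≤ d`, are linearly independent over `ℂ`. -/
theorem Complex.eq_zero_of_forall_sum_pow_mul_conj_pow_eq_zero (d : ℕ) (p : ℕ → ℂ)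
    (h : ∀ z : ℂ, ∑ n ∈ Finset.range (d + 1), z ^ n * conj z ^ (d - n) * p n = 0) :
    ∀ n ≤ d, p n = 0 := by
  set f : Polynomial ℂ :=
    ∑ n ∈ Finset.range (d + 1), Polynomial.C (p n) * Polynomial.X ^ n with hf
  let g : ℝ → ℂ := fun t => (⟨1, t⟩ : ℂ) / ⟨1, -t⟩
  have hne : ∀ t : ℝ, (⟨1, t⟩ : ℂ) ≠ 0 := fun t ht => by
    simpa using congrArg Complex.re ht
  have hg : Function.Injective g := fun s t hst => by
    have key := (div_eq_div_iff (hne (-s)) (hne (-t))).1 hst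
    have him := congrArg Complex.im key
    simp only [Complex.mul_im] at him
    linarith
  have hroot : ∀ t : ℝ, f.eval (g t) = 0 := fun t => by
    have hc : conj (⟨1, t⟩ : ℂ) = ⟨1, -t⟩ := rfl
    have hz := h ⟨1, t⟩
    rw [hc] at hz
    refine (mul_eq_zero.1 (?_ : (⟨1, -t⟩ : ℂ) ^ d * f.eval (g t) = 0)).resolve_left
      (pow_ne_zero _ (hne _))
    rw [← hz, hf, Polynomial.eval_finsetSum, Finset.mul_sum]
    refine Finset.sum_congr rfl fun n hn => ?_
    have hnd : n ≤ d := Finset.mem_range_succ_iff.1 hn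
    have hpow : (⟨1, -t⟩ : ℂ) ^ n ≠ 0 := pow_ne_zero _ (hne _)
    rw [← Nat.sub_add_cancel hnd, pow_add, Nat.sub_add_cancel hnd]
    simp only [Polynomial.eval_mul, Polynomial.eval_C, Polynomial.eval_pow, Polynomial.eval_X,
      g, div_pow]
    field_simp
  have hf0 : f = 0 := Polynomial.eq_zero_of_infinite_isRoot f <|
    (Set.infinite_range_of_injective hg).mono (by rintro _ ⟨t, rfl⟩; exact hroot t)
  intro n hn
  have hcoeff := congrArg (fun q => Polynomial.coeff q n) hf0
  simpa [hf, Polynomial.finsetSum_coeff, Polynomial.coeff_C_mul, Polynomial.coeff_X_pow,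
    Nat.lt_succ_iff, hn] using hcoeff

namespace Quaternion

/-- The quaternion unit `j`. -/
def unitJ : ℍ[ℝ] := ⟨0, 0, 1, 0⟩

@[simp] theorem re_unitJ : unitJ.re = 0 := rfl

@[simp] theorem imI_unitJ : unitJ.imI = 0 := rfl

@[simp] theorem imJ_unitJ : unitJ.imJ = 1 := rfl

@[simp] theorem imK_unitJ : unitJ.imK = 0 := rfl

theorem unitJ_ne_zero : unitJ ≠ 0 := fun h => by
  simpa using congrArg QuaternionAlgebra.imJ h

theorem unitJ_mul_coeComplex (z : ℂ) :
    unitJ * (z : ℍ[ℝ]) = ((conj z : ℂ) : ℍ[ℝ]) * unitJ := by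
  ext <;> simp

/-- The first component `p` in the decomposition `x = p + q * j` with `p` and `q` complex. -/
def fstComplex : ℍ[ℝ] →+ ℂ where
  toFun x := ⟨x.re, x.imI⟩
  map_zero' := rfl
  map_add' _ _ := rfl

/-- The second component `q` in the decomposition `x = p + q * j` with `p` and `q` complex. -/
def sndComplex : ℍ[ℝ] →+ ℂ where
  toFun x := ⟨x.imJ, x.imK⟩
  map_zero' := rfl
  map_add' _ _ := rfl

theorem fstComplex_apply (x : ℍ[ℝ]) : fstComplex x = ⟨x.re, x.imI⟩ := rfl

theorem sndComplex_apply (x : ℍ[ℝ]) : sndComplex x = ⟨x.imJ, x.imK⟩ := rfl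

theorem fstComplex_coeComplex_mul (c : ℂ) (x : ℍ[ℝ]) :
    fstComplex (c * x) = c * fstComplex x := by
  apply Complex.ext <;> simp [fstComplex_apply]

theorem sndComplex_coeComplex_mul (c : ℂ) (x : ℍ[ℝ]) :
    sndComplex (c * x) = c * sndComplex x := by
  apply Complex.ext <;> simp [sndComplex_apply]

theorem eq_zero_of_fstComplex_of_sndComplex {x : ℍ[ℝ]} (h₁ : fstComplex x = 0)
    (h₂ : sndComplex x = 0) : x = 0 := by
  rw [fstComplex_apply, Complex.ext_iff] at h₁
  rw [sndComplex_apply, Complex.ext_iff] at h₂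
  ext
  exacts [h₁.1, h₁.2, h₂.1, h₂.2]

/-- A left `ℂ`-linear functional annihilates `j * a n` whenever `∑ z ^ n * w * z ^ (d - n) * a n`
vanishes identically. -/
theorem map_unitJ_mul_eq_zero (d : ℕ) (a : ℕ → ℍ[ℝ])
    (h : ∀ z w : ℍ[ℝ], ∑ n ∈ Finset.range (d + 1), z ^ n * w * z ^ (d - n) * a n = 0)
    (L : ℍ[ℝ] →+ ℂ) (hL : ∀ (c : ℂ) (x : ℍ[ℝ]), L (c * x) = c * L x) :
    ∀ n ≤ d, L (unitJ * a n) = 0 := by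
  refine Complex.eq_zero_of_forall_sum_pow_mul_conj_pow_eq_zero d _ fun z => ?_
  have hz := congrArg L (h z unitJ)
  rw [map_sum, map_zero] at hz
  rw [← hz]
  refine Finset.sum_congr rfl fun n _ => ?_
  have hpow : ∀ (c : ℂ) (k : ℕ), (c : ℍ[ℝ]) ^ k = ((c ^ k : ℂ) : ℍ[ℝ]) := fun c k =>
    (map_pow ofComplex c k).symm
  rw [hpow, hpow, mul_assoc ((z ^ n : ℂ) : ℍ[ℝ]), unitJ_mul_coeComplex, map_pow,
    mul_assoc ((z ^ n : ℂ) : ℍ[ℝ]), mul_assoc _ unitJ, hL, hL, mul_assoc]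

end Quaternion

/-- Linear independence, as functions, of the monomials of bidegree `(d,1)`
with right quaternionic coefficients. -/
theorem bidegree_d_one_linear_independent (d : ℕ) (hd : 1 ≤ d)
    (a : ℕ → Quaternion ℝ)
    (h : ∀ z w : Quaternion ℝ,
      ∑ n ∈ Finset.range (d + 1), z ^ n * w * z ^ (d - n) * a n = 0) :
    ∀ n ≤ d, a n = 0 := by
  intro n hn
  have hj : Quaternion.unitJ * a n = 0 :=
    Quaternion.eq_zero_of_fstComplex_of_sndComplex
      (Quaternion.map_unitJ_mul_eq_zero d a h _ Quaternion.fstComplex_coeComplex_mul n hn)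
      (Quaternion.map_unitJ_mul_eq_zero d a h _ Quaternion.sndComplex_coeComplex_mul n hn)
  exact (mul_eq_zero.1 hj).resolve_left Quaternion.unitJ_ne_zero
end

section
/- For all nonnegative integers p, q with p + q = d, there exist real numbers r_0, r_1, …, r_d such that S_{p,q}(z,w) = ∑_{n=0}^{d} (z - n•w)^d · r_n for all quaternions z, w (here n•w is the scalar multiple of w by the real number n). -/
open Finset

/-- The ordered product of `z`'s and `w`'s determined by the word `α ∈ {0,1}^d`:
the `i`-th factor is `z` if `α i = true` and `w` otherwise. -/
noncomputable def wordProd {d : ℕ} (z w : Quaternion ℝ) (α : Fin d → Bool) : Quaternion ℝ :=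
  (List.ofFn fun i => if α i then z else w).prod

/-- `S d p z w`: the sum of the monomials corresponding to all words of length `d`
with exactly `p` entries equal to `1` (i.e. `p` factors `z` and `d - p` factors `w`). -/
noncomputable def S (d p : ℕ) (z w : Quaternion ℝ) : Quaternion ℝ :=
  ∑ α ∈ univ.filter (fun α : Fin d → Bool => (univ.filter fun i => α i = true).card = p),
    wordProd z w α

/-- Noncommutative binomial expansion of `(z + t • w) ^ d` over words of length `d`. -/
theorem add_smul_pow_eq_sum_wordProd (d : ℕ) (t : ℝ) (z w : Quaternion ℝ) :
    (z + t • w) ^ d =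
      ∑ α : Fin d → Bool, t ^ #{i | α i = false} • wordProd z w α := by
  induction d with
  | zero => simp [wordProd]
  | succ d ih =>
    rw [pow_succ', ih, ← (Fin.consEquiv fun _ : Fin (d + 1) => Bool).sum_comp,
      Fintype.sum_prod_type, Fintype.sum_bool, ← sum_add_distrib, mul_sum]
    refine sum_congr rfl fun α _ => ?_
    have hcard (b : Bool) : #{i | (Fin.cons b α : Fin (d + 1) → Bool) i = false} =
        (if b = false then 1 else 0) + #{i | α i = false} := by
      rw [Fin.card_filter_univ_succ']
      simp
    change _ = t ^ #{i | (Fin.cons true α : Fin (d + 1) → Bool) i = false} •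
        wordProd z w (Fin.cons true α) +
      t ^ #{i | (Fin.cons false α : Fin (d + 1) → Bool) i = false} •
        wordProd z w (Fin.cons false α)
    rw [hcard, hcard]
    simp [wordProd, List.ofFn_succ, add_mul, add_comm 1, pow_succ, mul_smul]

/-- For distinct nodes `v`, some linear combination of evaluations at the nodes extracts the
`k`-th coefficient of every polynomial of degree at most `d`. -/
theorem exists_sum_mul_pow_eq_ite {K : Type*} [Field K] {v : ℕ → K} (hv : Function.Injective v)
    (d k : ℕ) :
    ∃ r : ℕ → K, ∀ j ≤ d, ∑ n ∈ range (d + 1), r n * v n ^ j = if j = k then 1 else 0 := by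
  let V := Matrix.vandermonde fun i : Fin (d + 1) => v i
  have hV : IsUnit V.det :=
    (Matrix.det_vandermonde_ne_zero_iff.2 (hv.comp Fin.val_injective)).isUnit
  let e : Fin (d + 1) → K := fun j => if (j : ℕ) = k then 1 else 0
  let s := Matrix.vecMul e V⁻¹
  have hs : Matrix.vecMul s V = e := by
    rw [Matrix.vecMul_vecMul, Matrix.nonsing_inv_mul _ hV, Matrix.vecMul_one]
  refine ⟨fun n => if h : n < d + 1 then s ⟨n, h⟩ else 0, fun j hj => ?_⟩
  have h := congrFun hs ⟨j, Nat.lt_succ_of_le hj⟩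
  rw [sum_range]
  simpa [Matrix.vecMul, dotProduct, V, e, Matrix.vandermonde_apply, Fin.is_le] using h

/-- Every `S_{p,q}` is a real linear combination of the polynomials `(z - n w)^{p+q}`,
`n = 0, …, p + q`. -/
theorem S_eq_sum_pow_sub_nsmul (p q : ℕ) :
    ∃ r : ℕ → ℝ, ∀ z w : Quaternion ℝ,
      S (p + q) p z w
        = ∑ n ∈ Finset.range (p + q + 1),
            (z - (n : ℝ) • w) ^ (p + q) * ((r n : ℝ) : Quaternion ℝ) := by
  obtain ⟨r, hr⟩ := exists_sum_mul_pow_eq_ite (v := fun n : ℕ => -(n : ℝ))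
    (neg_injective.comp Nat.cast_injective) (p + q) q
  refine ⟨r, fun z w => ?_⟩
  simp_rw [Quaternion.mul_coe_eq_smul, sub_eq_add_neg, ← neg_smul,
    add_smul_pow_eq_sum_wordProd, smul_sum, smul_smul]
  rw [sum_comm, S, sum_filter]
  refine sum_congr rfl fun α _ => ?_
  have hcard : #{i | α i = true} + #{i | α i = false} = p + q := by
    simpa using card_filter_add_card_filter_not (s := univ) fun i => α i = true
  rw [← sum_smul, hr _ (by omega), ite_smul, one_smul, zero_smul]
  exact if_congr (by omega) rfl rfl
end

section
/- For every natural number d, every real polynomial of degree at most d is a real linear combination of the polynomials (X - 0)^d, (X - 1)^d, …, (X - d)^d; equivalently, the family {(X - n)^d : n = 0, …, d} spans (and hence is a basis of) the space of real polynomials of degree at most d. -/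
open Polynomial in
/-- Over a field of characteristic zero, the `d`-th powers of `d + 1` distinct monic linear
polynomials are linearly independent. -/
theorem linearIndependent_X_sub_C_pow {K : Type*} [Field K] [CharZero K] {d : ℕ}
    {f : Fin (d + 1) → K} (hf : Function.Injective f) :
    LinearIndependent K fun n => (X - C (f n)) ^ d := by
  rw [Fintype.linearIndependent_iff]
  intro g hg
  refine congrFun (Matrix.eq_zero_of_forall_pow_sum_mul_pow_eq_zero (neg_injective.comp hf)
    fun i => ?_)
  have hi : (i : ℕ) ≤ d := Nat.lt_succ_iff.mp i.isLt
  have hcoeff := congrArg (coeff · (d - i)) hg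
  simp only [sub_eq_add_neg, ← C_neg, finsetSum_coeff, coeff_smul, coeff_X_add_C_pow,
    Nat.sub_sub_self hi, Nat.choose_symm hi, smul_eq_mul, coeff_zero, ← mul_assoc,
    ← Finset.sum_mul] at hcoeff
  exact (mul_eq_zero.mp hcoeff).resolve_right
    (Nat.cast_ne_zero.mpr (Nat.choose_pos hi).ne')

open Polynomial in
/-- Over a field of characteristic zero, the `d`-th powers of `d + 1` distinct monic linear
polynomials span the polynomials of degree at most `d`. -/
theorem span_X_sub_C_pow_eq_degreeLT {K : Type*} [Field K] [CharZero K] {d : ℕ}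
    {f : Fin (d + 1) → K} (hf : Function.Injective f) :
    Submodule.span K (Set.range fun n => (X - C (f n)) ^ d) = degreeLT K (d + 1) := by
  have : FiniteDimensional K (degreeLT K (d + 1)) :=
    (degreeLT.basis K (d + 1)).finiteDimensional_of_finite
  refine Submodule.eq_of_le_of_finrank_eq ?_ ?_
  · rw [Submodule.span_le]
    rintro _ ⟨n, rfl⟩
    rw [SetLike.mem_coe, mem_degreeLT, degree_pow, degree_X_sub_C, nsmul_one]
    exact_mod_cast d.lt_succ_self
  · rw [finrank_span_eq_card (linearIndependent_X_sub_C_pow hf),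
      Module.finrank_eq_card_basis (degreeLT.basis K (d + 1))]

/-- For every `d`, the polynomials `(X - 0)^d, (X - 1)^d, …, (X - d)^d` span the space of
real polynomials of degree at most `d`. -/
theorem mem_span_pow_X_sub_C (d : ℕ) (P : Polynomial ℝ) (hP : P.degree ≤ d) :
    P ∈ Submodule.span ℝ
      (Set.range fun n : Fin (d + 1) =>
        (Polynomial.X - Polynomial.C ((n : ℕ) : ℝ)) ^ d) := by
  rw [span_X_sub_C_pow_eq_degreeLT (f := fun n : Fin (d + 1) => ((n : ℕ) : ℝ))
      (Nat.cast_injective.comp Fin.val_injective),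
    Polynomial.mem_degreeLT]
  exact hP.trans_lt (by exact_mod_cast d.lt_succ_self)
end

section
/- For all nonnegative integers p, q and all quaternions z, w, h, one has ∂̂_z S_{p+1,q}(z,w)[h] = ∂̂_w S_{p,q+1}(z,w)[h]. Explicitly: the sum, over all words α ∈ {0,1}^{p+q+1} with exactly p+1 ones and over all positions i with α_i = 1, of the ordered product (z,w)^α with its i-th factor replaced by h, equals the sum, over all words β ∈ {0,1}^{p+q+1} with exactly p ones and over all positions i with β_i = 0, of the ordered product (z,w)^β with its i-th factor replaced by h. -/
open Finset

/-- The ordered product determined by the word `α ∈ {0,1}^d`, with the `i`-th factor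
replaced by `h`; the other factors are `z` where `α = 1` and `w` where `α = 0`. -/
noncomputable def wordProdRep {d : ℕ} (z w h : Quaternion ℝ) (α : Fin d → Bool) (i : Fin d) :
    Quaternion ℝ :=
  (List.ofFn fun j => if j = i then h else if α j then z else w).prod

/-- `∂̂_z S_{p,d-p}(z,w)[h]`: the sum over all words of length `d` with exactly `p` ones and
over all positions carrying a `1`, of the corresponding monomial with that factor `z`
replaced by `h`. -/
noncomputable def DzS (d p : ℕ) (z w h : Quaternion ℝ) : Quaternion ℝ :=
  ∑ α ∈ univ.filter (fun α : Fin d → Bool => (univ.filter fun i => α i = true).card = p),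
    ∑ i ∈ univ.filter (fun i => α i = true), wordProdRep z w h α i

/-- `∂̂_w S_{p,d-p}(z,w)[h]`: the sum over all words of length `d` with exactly `p` ones and
over all positions carrying a `0`, of the corresponding monomial with that factor `w`
replaced by `h`. -/
noncomputable def DwS (d p : ℕ) (z w h : Quaternion ℝ) : Quaternion ℝ :=
  ∑ α ∈ univ.filter (fun α : Fin d → Bool => (univ.filter fun i => α i = true).card = p),
    ∑ i ∈ univ.filter (fun i => α i = false), wordProdRep z w h α i

/-- Flipping the letter at position `i` does not change the product with the `i`-th factor
replaced. -/
theorem wordProdRep_update {d : ℕ} (z w h : Quaternion ℝ) (α : Fin d → Bool) (i : Fin d)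
    (b : Bool) : wordProdRep z w h (Function.update α i b) i = wordProdRep z w h α i := by
  unfold wordProdRep
  congr 2
  funext j
  by_cases hj : j = i <;> simp [hj]

theorem filter_update_true {d : ℕ} (α : Fin d → Bool) (i : Fin d) :
    (univ.filter fun j => Function.update α i true j = true) =
      insert i (univ.filter fun j => α j = true) := by
  ext j
  by_cases hj : j = i <;> simp [hj]

theorem filter_update_false {d : ℕ} (α : Fin d → Bool) (i : Fin d) :
    (univ.filter fun j => Function.update α i false j = true) =
      (univ.filter fun j => α j = true).erase i := by
  ext j
  by_cases hj : j = i <;> simp [hj]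

/-- `∂̂_z S_{p+1,q}(z,w)[h] = ∂̂_w S_{p,q+1}(z,w)[h]`. -/
theorem DzS_eq_DwS (p q : ℕ) (z w h : Quaternion ℝ) :
    DzS (p + q + 1) (p + 1) z w h = DwS (p + q + 1) p z w h := by
  unfold DzS DwS
  rw [sum_sigma', sum_sigma']
  refine sum_bij' (fun x _ => ⟨Function.update x.1 x.2 false, x.2⟩)
    (fun x _ => ⟨Function.update x.1 x.2 true, x.2⟩) ?_ ?_ ?_ ?_ ?_
  · rintro ⟨α, i⟩ hx
    simp only [mem_sigma, mem_filter, mem_univ, true_and] at hx ⊢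
    rw [filter_update_false, card_erase_of_mem (by simp [hx.2])]
    simp [hx.1]
  · rintro ⟨α, i⟩ hx
    simp only [mem_sigma, mem_filter, mem_univ, true_and] at hx ⊢
    rw [filter_update_true, card_insert_of_notMem (by simp [hx.2])]
    simp [hx.1]
  · rintro ⟨α, i⟩ hx
    simp only [mem_sigma, mem_filter, mem_univ, true_and] at hx
    simp [← hx.2]
  · rintro ⟨α, i⟩ hx
    simp only [mem_sigma, mem_filter, mem_univ, true_and] at hx
    simp [← hx.2]
  · rintro ⟨α, i⟩ _
    exact (wordProdRep_update z w h α i false).symm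
end

section
/- Let a, b, c, d be real numbers with ad - bc ≠ 0 and let f : ℍ → ℍ be differentiable over ℝ. Define the vector field Y : ℍ² → ℍ² by Y(z,w) := ((ad-bc)⁻¹ d • ((a•z + b•w) · f(c•z + d•w)), -(ad-bc)⁻¹ c • ((a•z + b•w) · f(c•z + d•w))). Then Div Y(z,w)[h] = h · f(c•z + d•w) for all z, w, h ∈ ℍ. (Overshear vector fields have divergence f(cz + dw).) -/
/-- The derivative of `x ↦ k • ((s • x + u) * f (t • x + v))` on the quaternions. -/
theorem fderiv_smul_affine_mul_comp_affine {f : Quaternion ℝ → Quaternion ℝ}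
    (hf : Differentiable ℝ f) (k s t : ℝ) (u v x h : Quaternion ℝ) :
    fderiv ℝ (fun y => k • ((s • y + u) * f (t • y + v))) x h
      = (k * t) • ((s • x + u) * fderiv ℝ f (t • x + v) h)
        + (k * s) • (h * f (t • x + v)) := by
  have affine (r : ℝ) (q : Quaternion ℝ) :
      HasFDerivAt (fun y : Quaternion ℝ => r • y + q)
        (r • ContinuousLinearMap.id ℝ (Quaternion ℝ)) x :=
    ((hasFDerivAt_id x).const_smul r).add_const q
  have comp := (hf (t • x + v)).hasFDerivAt.comp x (affine t v)
  have key := ((affine s u).mul' comp).const_smul k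
  have eq := congrArg (fun L => L h) key.fderiv
  refine eq.trans ?_
  simp [smul_smul]

/-- Overshear vector fields have divergence `f(cz + dw)`: for real `a, b, c, d` with
`ad - bc ≠ 0` and real-differentiable `f : ℍ → ℍ`, the vector field
`Y(z,w) = ((ad-bc)⁻¹ d • ((az+bw)·f(cz+dw)), -(ad-bc)⁻¹ c • ((az+bw)·f(cz+dw)))`
satisfies `Div Y(z,w)[h] = h · f(cz + dw)`. -/
theorem overshear_vector_field_div (a b c d : ℝ) (habcd : a * d - b * c ≠ 0)
    (f : Quaternion ℝ → Quaternion ℝ) (hf : Differentiable ℝ f) (z w h : Quaternion ℝ) :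
    fderiv ℝ (fun z' =>
        ((a * d - b * c)⁻¹ * d) • ((a • z' + b • w) * f (c • z' + d • w))) z h
      + fderiv ℝ (fun w' =>
        (-((a * d - b * c)⁻¹ * c)) • ((a • z + b • w') * f (c • z + d • w'))) w h
      = h * f (c • z + d • w) := by
  simp only [add_comm (a • z), add_comm (c • z)]
  rw [fderiv_smul_affine_mul_comp_affine hf, fderiv_smul_affine_mul_comp_affine hf,
    add_comm (d • w), add_comm (b • w)]
  match_scalars <;> field_simp <;> ring
end

section
/- Let μ ∈ ℍ and define the vector field X : ℍ² → ℍ² by X(z,w) := (μ · (z - μw)², (z - μw)²). Then X has divergence (i.e., there exists g : ℍ² → ℍ with Div X(z,w)[h] = h · g(z,w) for all z, w, h ∈ ℍ) if and only if μ is real; in that case Div X ≡ 0. -/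
/-- The real Fréchet derivative of the square of a function into a normed algebra. -/
theorem HasFDerivAt.sq_noncomm {E A : Type*} [NormedAddCommGroup E] [NormedSpace ℝ E]
    [NormedRing A] [NormedAlgebra ℝ A] {f : E → A} {f' : E →L[ℝ] A} {x : E}
    (hf : HasFDerivAt f f' x) (h : E) :
    fderiv ℝ (fun y => f y ^ 2) x h = f x * f' h + f' h * f x := by
  simp only [sq]
  have hsq : HasFDerivAt (fun y => f y * f y) _ x := hf.mul' hf
  rw [hsq.fderiv]
  simp

/-- The divergence operator of `(z, w) ↦ (μ (z - μw)², (z - μw)²)` is left multiplication by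
the commutator of `μ` and `z - μw`. -/
theorem fderiv_add_fderiv_generalized_shear {A : Type*} [NormedRing A] [NormedAlgebra ℝ A]
    (μ z w h : A) :
    fderiv ℝ (fun z' => μ * (z' - μ * w) ^ 2) z h + fderiv ℝ (fun w' => (z - μ * w') ^ 2) w h =
      (μ * (z - μ * w) - (z - μ * w) * μ) * h := by
  have hz : HasFDerivAt (fun z' : A => z' - μ * w) (ContinuousLinearMap.id ℝ A) z :=
    (hasFDerivAt_id z).sub_const _
  have hw : HasFDerivAt (fun w' : A => z - μ * w')
      (-(μ • ContinuousLinearMap.id ℝ A)) w :=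
    ((hasFDerivAt_id w).const_mul μ).const_sub z
  have hd : DifferentiableAt ℝ (fun z' : A => (z' - μ * w) ^ 2) z := by fun_prop
  rw [hw.sq_noncomm, fderiv_const_mul hd]
  simp only [smul_apply, hz.sq_noncomm, neg_apply,
    ContinuousLinearMap.id_apply, smul_eq_mul]
  noncomm_ring

/-- A quaternion all of whose commutators are central is real. -/
theorem Quaternion.exists_eq_coe_of_commutator_commute (μ : Quaternion ℝ)
    (hμ : ∀ z h : Quaternion ℝ, Commute (μ * z - z * μ) h) : ∃ r : ℝ, μ = (r : Quaternion ℝ) := by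
  simp only [Commute, SemiconjBy, Quaternion.ext_iff, Quaternion.re_mul, Quaternion.imI_mul,
    Quaternion.imJ_mul, Quaternion.imK_mul, Quaternion.re_sub, Quaternion.imI_sub,
    Quaternion.imJ_sub, Quaternion.imK_sub] at hμ
  have hi := hμ ⟨0, 1, 0, 0⟩ ⟨0, 1, 0, 0⟩
  have hj := hμ ⟨0, 0, 1, 0⟩ ⟨0, 0, 1, 0⟩
  dsimp only at hi hj
  refine ⟨μ.re, ?_⟩
  ext <;> simp <;> linarith [hi.2.2.1, hi.2.2.2, hj.2.1, hj.2.2.2]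

/-- The vector field `X(z,w) = (μ (z - μw)², (z - μw)²)` has divergence (i.e. its
divergence operator is left-linear in `h`) if and only if `μ` is real, in which case its
divergence vanishes identically. -/
theorem generalized_shear_has_div_iff_real (μ : Quaternion ℝ) :
    ((∃ g : Quaternion ℝ × Quaternion ℝ → Quaternion ℝ, ∀ z w h : Quaternion ℝ,
        fderiv ℝ (fun z' => μ * (z' - μ * w) ^ 2) z h
          + fderiv ℝ (fun w' => (z - μ * w') ^ 2) w h = h * g (z, w))
      ↔ ∃ r : ℝ, μ = (r : Quaternion ℝ))
    ∧ ((∃ r : ℝ, μ = (r : Quaternion ℝ)) → ∀ z w h : Quaternion ℝ,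
        fderiv ℝ (fun z' => μ * (z' - μ * w) ^ 2) z h
          + fderiv ℝ (fun w' => (z - μ * w') ^ 2) w h = 0) := by
  simp only [fderiv_add_fderiv_generalized_shear]
  have hzero : (∃ r : ℝ, μ = (r : Quaternion ℝ)) → ∀ z w h : Quaternion ℝ,
      (μ * (z - μ * w) - (z - μ * w) * μ) * h = 0 := by
    rintro ⟨r, rfl⟩ z w h
    rw [(Quaternion.coe_commute r _).eq, sub_self, zero_mul]
  refine ⟨⟨?_, fun hr => ⟨0, fun z w h => by simpa using hzero hr z w h⟩⟩, hzero⟩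
  rintro ⟨g, hg⟩
  refine Quaternion.exists_eq_coe_of_commutator_commute μ fun z h => ?_
  have hone : μ * z - z * μ = g (z, 0) := by simpa using hg z 0 1
  have hh : (μ * z - z * μ) * h = h * g (z, 0) := by simpa using hg z 0 h
  rw [Commute, SemiconjBy, hh, hone]
end

section
/- The vector field X : ℍ² → ℍ² given by X(z,w) := (z²·w, -z·w²) does not have divergence: there is no function g : ℍ² → ℍ such that Div X(z,w)[h] = h · g(z,w) for all z, w, h ∈ ℍ. (Indeed Div X(z,w)[h] = h·z·w - z·w·h, which is not left-linear in h.) -/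
/-- The derivative of the square in a normed algebra, not necessarily commutative. -/
theorem hasFDerivAt_sq_normedRing {A : Type*} [NormedRing A] [NormedAlgebra ℝ A] (a : A) :
    HasFDerivAt (fun x : A => x ^ 2)
      (a • ContinuousLinearMap.id ℝ A + MulOpposite.op a • ContinuousLinearMap.id ℝ A) a := by
  simp only [pow_two]
  exact (hasFDerivAt_id (𝕜 := ℝ) a).mul' (hasFDerivAt_id (𝕜 := ℝ) a)

/-- The divergence of `(z, w) ↦ (z²w, -zw²)` in the direction `h` is `hzw - zwh`. -/
theorem fderiv_sq_mul_add_fderiv_neg_mul_sq {A : Type*} [NormedRing A] [NormedAlgebra ℝ A]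
    (z w h : A) :
    fderiv ℝ (fun z' => z' ^ 2 * w) z h + fderiv ℝ (fun w' => -(z * w' ^ 2)) w h
      = h * z * w - z * w * h := by
  rw [((hasFDerivAt_sq_normedRing z).mul_const' w).fderiv,
    ((hasFDerivAt_sq_normedRing w).const_mul z).fun_neg.fderiv]
  simp
  noncomm_ring

/-- The vector field `X(z,w) = (z²w, -zw²)` does not have divergence: there is no
`g : ℍ² → ℍ` with `Div X(z,w)[h] = h · g(z,w)` for all `z, w, h`. -/
theorem no_divergence_example :
    ¬ ∃ g : Quaternion ℝ × Quaternion ℝ → Quaternion ℝ, ∀ z w h : Quaternion ℝ,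
        fderiv ℝ (fun z' => z' ^ 2 * w) z h
          + fderiv ℝ (fun w' => -(z * w' ^ 2)) w h = h * g (z, w) := by
  rintro ⟨g, hg⟩
  simp only [fderiv_sq_mul_add_fderiv_neg_mul_sq] at hg
  have hcomm (z h : Quaternion ℝ) : h * z = z * h := by
    have hg_zero : g (z, 1) = 0 := by simpa using (hg z 1 1).symm
    simpa [hg_zero, sub_eq_zero] using hg z 1 h
  have himK (z h : Quaternion ℝ) :
      h.re * z.imK + h.imI * z.imJ - h.imJ * z.imI + h.imK * z.re
        = z.re * h.imK + z.imI * h.imJ - z.imJ * h.imI + z.imK * h.re := by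
    rw [← Quaternion.imK_mul, ← Quaternion.imK_mul, hcomm]
  have := himK ⟨0, 1, 0, 0⟩ ⟨0, 0, 1, 0⟩
  norm_num at this
end
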